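/- arXiv:1309.6491 — 7 statements merged into one kernel-verified Lean document; each statement's English description precedes it below -/
import Mathlib

section
/- For all integers k ≥ 2 and n > k, s'(n, k) ≤ 1 − ex(n, K^{(k)}_{k+1}) / C(n, k). -/
/-!
Take a largest `k`-uniform hypergraph `𝓖` without a complete `k`-graph on `k + 1` vertices, and let
`𝓔` be its complement among all `k`-sets. Being `k`-uniform, `𝓔` equals `𝓔_k` (`secE_of_uniform`),
and `𝓔⁰_{k+1}` is empty because a `(k+1)`-set with no `k`-subset in `𝓔` would have all of its
`k`-subsets in `𝓖`. So the sum for `𝓔` is `|𝓔| / C(n, k) = 1 - |𝓖| / C(n, k)`, which bounds the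
minimum `s'(n, k)` from above.
-/

open Finset

/-- A hypergraph (edge set `𝓔` over vertex type `α`) is `q`-linear if any two
distinct edges intersect in fewer than `q` vertices. -/
def qLinear {α : Type*} [DecidableEq α] (q : ℕ) (𝓔 : Finset (Finset α)) : Prop :=
  ∀ E ∈ 𝓔, ∀ E' ∈ 𝓔, E ≠ E' → (E ∩ E').card < q

/-- `𝓔_k`: the family of `k`-element sets contained in some edge of `𝓔`. -/
def secE {α : Type*} [DecidableEq α] (k : ℕ) (𝓔 : Finset (Finset α)) :
    Finset (Finset α) :=
  𝓔.biUnion fun E => E.powersetCard k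

/-- `𝓔⁰_{k+1}` (relative to vertex set `V`): the `(k+1)`-element subsets of `V`
none of whose `k`-element subsets belongs to `𝓔_k`. -/
def zeroE {α : Type*} [DecidableEq α] (V : Finset α) (k : ℕ)
    (𝓔 : Finset (Finset α)) : Finset (Finset α) :=
  (V.powersetCard (k + 1)).filter fun F => ∀ G ∈ F.powersetCard k, G ∉ secE k 𝓔

/-- The YBLM-type sum `Σ_{S ∈ 𝓔_k ∪ 𝓔⁰_{k+1}} C(n,|S|)⁻¹` for a hypergraph on
`n` vertices. -/
noncomputable def hSum (n k : ℕ) (𝓔 : Finset (Finset (Fin n))) : ℝ :=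
  ∑ S ∈ secE k 𝓔 ∪ zeroE Finset.univ k 𝓔, ((n.choose S.card : ℝ))⁻¹

/-- `s(n,k)`: the minimum of `hSum n k 𝓔` over all `(k-1)`-linear hypergraphs
on `n` vertices. -/
noncomputable def sVal (n k : ℕ) : ℝ :=
  sInf {r : ℝ | ∃ 𝓔 : Finset (Finset (Fin n)), qLinear (k - 1) 𝓔 ∧ r = hSum n k 𝓔}

/-- `s'(n,k)`: the minimum of `hSum n k 𝓔` over all hypergraphs on `n`
vertices. -/
noncomputable def s'Val (n k : ℕ) : ℝ :=
  sInf {r : ℝ | ∃ 𝓔 : Finset (Finset (Fin n)), r = hSum n k 𝓔}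

/-- The Turán number `ex(n, K^{(k)}_{k+1})`: the maximum number of edges of a
`k`-uniform hypergraph on `n` vertices in which no `k+1` vertices have all of
their `k`-element subsets as edges. -/
noncomputable def turanK (n k : ℕ) : ℕ :=
  sSup {m : ℕ | ∃ 𝓖 : Finset (Finset (Fin n)),
    (∀ E ∈ 𝓖, E.card = k) ∧
    (∀ F : Finset (Fin n), F.card = k + 1 → ∃ G ∈ F.powersetCard k, G ∉ 𝓖) ∧
    m = 𝓖.card}

theorem secE_of_uniform {α : Type*} [DecidableEq α] (k : ℕ) (𝓔 : Finset (Finset α))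
    (h : ∀ E ∈ 𝓔, E.card = k) : secE k 𝓔 = 𝓔 := by
  ext S
  simp only [secE, mem_biUnion, mem_powersetCard]
  constructor
  · rintro ⟨E, hE, hSE, hS⟩
    rwa [eq_of_subset_of_card_le hSE (by rw [h E hE, hS])]
  · exact fun hS => ⟨S, hS, Subset.rfl, h S hS⟩

theorem s'Val_le_hSum (n k : ℕ) (𝓔 : Finset (Finset (Fin n))) : s'Val n k ≤ hSum n k 𝓔 := by
  refine csInf_le ⟨0, ?_⟩ ⟨𝓔, rfl⟩
  rintro _ ⟨𝓔', rfl⟩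
  exact sum_nonneg fun S _ => by positivity

/-- The supremum defining the Turán number is attained. -/
theorem exists_turanK (n k : ℕ) : ∃ 𝓖 : Finset (Finset (Fin n)),
    (∀ E ∈ 𝓖, E.card = k) ∧
    (∀ F : Finset (Fin n), F.card = k + 1 → ∃ G ∈ F.powersetCard k, G ∉ 𝓖) ∧
    turanK n k = 𝓖.card := by
  refine Nat.sSup_mem (s := {m : ℕ | ∃ 𝓖 : Finset (Finset (Fin n)),
    (∀ E ∈ 𝓖, E.card = k) ∧
    (∀ F : Finset (Fin n), F.card = k + 1 → ∃ G ∈ F.powersetCard k, G ∉ 𝓖) ∧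
    m = 𝓖.card}) ⟨0, ∅, by simp, fun F hF => ?_, rfl⟩
    ⟨Fintype.card (Finset (Fin n)), ?_⟩
  · obtain ⟨G, hG⟩ := powersetCard_nonempty.2 (show k ≤ F.card by omega)
    exact ⟨G, hG, notMem_empty G⟩
  · rintro _ ⟨𝓖, -, -, rfl⟩
    exact card_le_univ 𝓖

theorem s'_le_turan (k n : ℕ) (hk : 2 ≤ k) (hn : k < n) :
    s'Val n k ≤ 1 - (turanK n k : ℝ) / (n.choose k : ℝ) := by
  obtain ⟨𝓖, hunif, hfree, hcard⟩ := exists_turanK n k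
  have hsub : 𝓖 ⊆ powersetCard k univ := fun E hE =>
    mem_powersetCard.2 ⟨subset_univ E, hunif E hE⟩
  refine (s'Val_le_hSum n k (powersetCard k univ \ 𝓖)).trans_eq ?_
  have hu : ∀ E ∈ powersetCard k univ \ 𝓖, E.card = k := fun E hE =>
    (mem_powersetCard.1 (mem_sdiff.1 hE).1).2
  have hzero : zeroE univ k (powersetCard k univ \ 𝓖) = ∅ := by
    refine eq_empty_of_forall_notMem fun F hF0 => ?_
    simp only [zeroE, mem_filter] at hF0
    obtain ⟨hF, hall⟩ := hF0
    obtain ⟨G, hG, hG'⟩ := hfree F (mem_powersetCard.1 hF).2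
    apply hall G hG
    rw [secE_of_uniform k _ hu]
    exact mem_sdiff.2 ⟨mem_powersetCard.2 ⟨subset_univ G, (mem_powersetCard.1 hG).2⟩, hG'⟩
  have hpos : (n.choose k : ℝ) ≠ 0 := by exact_mod_cast (Nat.choose_pos hn.le).ne'
  have hc : ((powersetCard k univ \ 𝓖).card : ℝ) = n.choose k - 𝓖.card := by
    rw [cast_card_sdiff hsub, card_powersetCard, card_univ, Fintype.card_fin]
  rw [hSum, hzero, union_empty, secE_of_uniform k _ hu,
    sum_congr rfl fun S hS => by rw [hu S hS], sum_const, nsmul_eq_mul, hc, hcard]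
  field_simp
end

section
/- For every integer k ≥ 3, if L' is the limit of s'(n,k) as n → ∞ (which exists), then L' ≤ (1 − 1/k)^{k−1}. -/
/-!
Colour the vertices with `ZMod k` and call a `k`-set `S` *good from `j`* if, reading colours
cyclically from `j`, for every `1 ≤ s < k` more than `s` vertices of `S` have one of the first `s`
colours. Let the edges be the `k`-sets that are good from some `j`.

Every `(k+1)`-set `F` contains an edge (`exists_good_subset`): by the cycle lemma
(`exists_cycle_start`) there is a `j` from which the first `s` colours hold more than `s` vertices
of `F` for all `1 ≤ s ≤ k`, and discarding a vertex of `F` whose colour comes last in the order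
starting at `j` leaves a good `k`-set. Hence `𝓔⁰_{k+1}` is empty.

For the density, fix `S` and `j`. A colouring for which `S` is good from `j` uses only the first
`m = k - 1` colours on `S`, and among the `m` rotations of these colours at most one is good from
`j` (`rot_unique`). So the number of such colourings is at most `m ^ (k-1) * k ^ (n-k)`
(`card_goodFrom_le`). Summing over `j` and `S`, some colouring yields at most
`C(n,k) * (1 - 1/k) ^ (k-1)` edges, so the bound holds for every `n ≥ k`, not only in the limit.

Throughout, `k = m + 1`.
-/

open Finset

/-- `S` is good from colour `j`: for `1 ≤ s ≤ m`, more than `s` vertices of `S` have a colour among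
`j, j + 1, …, j + s - 1`. The number `(c x - j).val` is the position of the colour of `x` in the
cyclic order starting at `j`. -/
def GoodFrom {α : Type*} {m : ℕ} (c : α → ZMod (m + 1)) (j : ZMod (m + 1))
    (S : Finset α) : Prop :=
  ∀ s, 1 ≤ s → s ≤ m → s + 1 ≤ (S.filter fun x => (c x - j).val < s).card

/-- The cycle lemma: if `a` has period `k` and sums to `k + 1` over a period, then from some
starting point all partial sums of `a` of length `1 ≤ s ≤ k` exceed `s`. -/
lemma exists_cycle_start (k : ℕ) (hk : 0 < k) (a : ℕ → ℕ) (hper : ∀ i, a (i + k) = a i)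
    (hsum : ∑ i ∈ range k, a i = k + 1) :
    ∃ j, ∀ s, 1 ≤ s → s ≤ k → s + 1 ≤ ∑ i ∈ range s, a (j + i) := by
  set P : ℕ → ℤ := fun t => ∑ i ∈ range t, ((a i : ℤ) - 1) with hP
  have hPadd : ∀ j s, P (j + s) = P j + ((∑ i ∈ range s, a (j + i) : ℕ) : ℤ) - s := by
    intro j s
    simp only [hP, sum_range_add, sum_sub_distrib]
    simp
    ring
  have hPk : ∀ t, P (t + k) = P t + 1 := by
    intro t
    induction t with
    | zero =>
      have h : ∑ i ∈ range k, (a i : ℤ) = k + 1 := by exact_mod_cast hsum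
      rw [zero_add]
      simp [hP, sum_sub_distrib, h]
    | succ t ih =>
      have h1 : P (t + 1 + k) = P (t + k) + ((a (t + k) : ℤ) - 1) := by
        rw [show t + 1 + k = (t + k) + 1 by ring]; exact sum_range_succ _ _
      have h2 : P (t + 1) = P t + ((a t : ℤ) - 1) := sum_range_succ _ _
      rw [h1, h2, hper, ih]; ring
  -- The start is the last minimiser of `P` on `[0, k)`, found by minimising a perturbed function.
  obtain ⟨j, hj, hmin⟩ := exists_min_image (range k) (fun t => P t * k - t) ⟨0, by simpa⟩
  rw [mem_range] at hj
  have key : ∀ t, t < k → P j ≤ P t ∧ (j < t → P j < P t) := by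
    intro t ht
    have h := hmin t (mem_range.2 ht)
    constructor
    · by_contra! h'
      have : (P t + 1) * k ≤ P j * k := by gcongr; omega
      have : (t : ℤ) ≥ 0 := by positivity
      have : (j : ℤ) < k := by exact_mod_cast hj
      linarith
    · intro hjt
      by_contra! h'
      have : P t * k ≤ P j * k := by gcongr
      have : (j : ℤ) < t := by exact_mod_cast hjt
      linarith
  refine ⟨j, fun s h1 hs => ?_⟩
  have hlt : P j < P (j + s) := by
    by_cases h : j + s < k
    · exact (key _ h).2 (by omega)
    · have e := hPk (j + s - k)
      rw [Nat.sub_add_cancel (by omega)] at e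
      have := (key (j + s - k) (by omega)).1
      omega
  have := hPadd j s
  zify
  push_cast at this
  omega

lemma val_sub_eq_iff {m : ℕ} (v : ZMod (m + 1)) (j i : ℕ) (hi : i < m + 1) :
    (v - (j : ZMod (m + 1))).val = i ↔ v = ((j + i : ℕ) : ZMod (m + 1)) := by
  constructor
  · intro h
    have : v - (j : ZMod (m + 1)) = (i : ZMod (m + 1)) := by
      rw [← h, ZMod.natCast_zmod_val]
    rw [Nat.cast_add, ← this]; ring
  · rintro rfl
    rw [Nat.cast_add, add_sub_cancel_left, ZMod.val_natCast_of_lt hi]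

lemma exists_good_subset {α : Type*} [DecidableEq α] {m : ℕ} (c : α → ZMod (m + 1))
    (F : Finset α) (hF : F.card = m + 2) :
    ∃ S ⊆ F, S.card = m + 1 ∧ ∃ j, GoodFrom c j S := by
  set a : ℕ → ℕ := fun i => (F.filter fun x => c x = (i : ZMod (m + 1))).card with ha
  have hN : ∀ j s : ℕ, s ≤ m + 1 →
      (F.filter fun x => (c x - (j : ZMod (m + 1))).val < s).card
        = ∑ i ∈ range s, a (j + i) := by
    intro j s hs
    rw [card_eq_sum_card_fiberwise (f := fun x => (c x - (j : ZMod (m + 1))).val)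
      (t := range s) (by intro x hx; simpa using (mem_filter.1 hx).2)]
    refine sum_congr rfl fun i hi => ?_
    rw [mem_range] at hi
    rw [ha, filter_filter]
    congr 1
    refine filter_congr fun x _ => ?_
    rw [← val_sub_eq_iff _ _ _ (by omega)]
    omega
  obtain ⟨j, hj⟩ := exists_cycle_start (m + 1) (by omega) a
    (by intro i; simp only [ha]; push_cast
        rw [show ((i : ZMod (m + 1)) + (m + 1)) = i by
          have := ZMod.natCast_self (m + 1); push_cast at this; rw [this, add_zero]])
    (by
      have := hN 0 (m + 1) le_rfl
      simp only [zero_add] at this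
      rw [← this, filter_true_of_mem (fun x _ => ZMod.val_lt _), hF])
  obtain ⟨x, hx, hmax⟩ := exists_max_image F (fun x => (c x - (j : ZMod (m + 1))).val)
    (card_pos.1 (by omega))
  refine ⟨F.erase x, erase_subset _ _, by rw [card_erase_of_mem hx, hF]; rfl, j, ?_⟩
  intro s h1 hs
  by_cases h : (c x - (j : ZMod (m + 1))).val < s
  · rw [filter_true_of_mem, card_erase_of_mem hx]
    · omega
    · intro y hy
      exact (hmax y (mem_of_mem_erase hy)).trans_lt h
  · have e : (F.erase x).filter (fun x => (c x - (j : ZMod (m + 1))).val < s)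
        = F.filter (fun x => (c x - (j : ZMod (m + 1))).val < s) := by
      ext y
      simp only [mem_filter, mem_erase]
      constructor
      · tauto
      · rintro ⟨hy, h'⟩
        refine ⟨⟨?_, hy⟩, h'⟩
        rintro rfl
        exact h h'
    rw [e, hN j s (by omega)]
    exact hj s h1 (by omega)

lemma GoodFrom.val_lt {α : Type*} {m : ℕ} (hm : 1 ≤ m) {c : α → ZMod (m + 1)}
    {j : ZMod (m + 1)} {S : Finset α} (hS : S.card = m + 1) (h : GoodFrom c j S) :
    ∀ x ∈ S, (c x - j).val < m := by
  have h1 := h m hm le_rfl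
  have : S.filter (fun x => (c x - j).val < m) = S :=
    eq_of_subset_of_card_le (filter_subset _ _) (by omega)
  intro x hx
  rw [← this] at hx
  exact (mem_filter.1 hx).2

/-- The uniqueness half of the cycle lemma: a nontrivial rotation by `r` modulo `m` of the
positions on `S` destroys goodness. The `m - r` first positions before the rotation and the `r`
first positions after it come from disjoint parts of `S`, of total size at least `m + 2`. -/
lemma rot_unique {α : Type*} {m : ℕ} {c c' : α → ZMod (m + 1)} {j : ZMod (m + 1)}
    {S : Finset α} (hS : S.card = m + 1) (h : GoodFrom c j S) (h' : GoodFrom c' j S)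
    {r : ℕ} (hr : r < m) (hrot : ∀ x ∈ S, (c' x - j).val = ((c x - j).val + r) % m) :
    r = 0 := by
  classical
  by_contra h0
  have h1 := h (m - r) (by omega) (by omega)
  have h2 := h' r (by omega) (by omega)
  have hlt := h.val_lt (by omega) hS
  have hd : Disjoint (S.filter fun x => (c x - j).val < m - r)
      (S.filter fun x => (c' x - j).val < r) := by
    rw [disjoint_left]
    intro x hx hx'
    rw [mem_filter] at hx hx'
    rw [hrot x hx.1, Nat.mod_eq_of_lt (by omega)] at hx'
    omega
  have h3 := card_le_card (union_subset (filter_subset (fun x => (c x - j).val < m - r) S)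
    (filter_subset (fun x => (c' x - j).val < r) S))
  rw [card_union_of_disjoint hd] at h3
  omega

lemma val_add_sub {m : ℕ} (j : ZMod (m + 1)) {t : ℕ} (ht : t < m + 1) :
    (j + (t : ZMod (m + 1)) - j).val = t := by
  rw [add_sub_cancel_left, ZMod.val_natCast_of_lt ht]

open Classical in
lemma card_goodFrom_le {n m : ℕ} (hm : 1 ≤ m) (j : ZMod (m + 1)) (S : Finset (Fin n))
    (hS : S.card = m + 1) :
    (univ.filter fun c : Fin n → ZMod (m + 1) => GoodFrom c j S).card
      ≤ m ^ m * (m + 1) ^ (n - (m + 1)) := by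
  set G := univ.filter fun c : Fin n → ZMod (m + 1) => GoodFrom c j S with hG
  set A : Finset (ZMod (m + 1)) := univ.filter fun v => (v - j).val < m with hA
  have hAcard : A.card ≤ m := by
    refine (card_le_card_of_injOn (t := range m) (fun v => (v - j).val)
      (by intro v hv; simpa [hA] using hv) ?_).trans_eq (card_range m)
    intro v _ w _ hvw
    exact sub_left_injective (ZMod.val_injective _ hvw)
  -- Colourings whose positions on `S` all lie below `m`.
  set T := Fintype.piFinset fun x : Fin n => if x ∈ S then A else univ with hT
  have hTcard : T.card ≤ m ^ (m + 1) * (m + 1) ^ (n - (m + 1)) := by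
    rw [hT, Fintype.card_piFinset]
    simp only [apply_ite card, prod_ite, prod_const, card_univ, ZMod.card]
    have e1 : (univ.filter fun x => x ∈ S).card = m + 1 := by simpa using hS
    have e2 : (univ.filter fun x => x ∉ S).card = n - (m + 1) := by
      rw [← hS, filter_not, card_sdiff_of_subset (filter_subset _ _)]; simp
    rw [e1, e2]
    gcongr
  -- Rotating the positions on `S` modulo `m` is jointly injective in the colouring and the angle.
  set f : (Fin n → ZMod (m + 1)) × ℕ → (Fin n → ZMod (m + 1)) := fun p x =>
    if x ∈ S then j + ((((p.1 x - j).val + p.2) % m : ℕ) : ZMod (m + 1)) else p.1 x with hf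
  have hfS : ∀ p, ∀ x ∈ S, (f p x - j).val = ((p.1 x - j).val + p.2) % m := by
    intro p x hx
    simp only [hf, if_pos hx]
    exact val_add_sub j ((Nat.mod_lt _ (by omega)).trans (by omega))
  have aux : ∀ c c' r r', GoodFrom c j S → GoodFrom c' j S → r' < m → r ≤ r' →
      f (c, r) = f (c', r') → r = r' := by
    intro c c' r r' hc hc' hr' hle he
    have := rot_unique (r := r' - r) hS hc' hc (by omega) (by
      intro x hx
      have e1 := hfS (c, r) x hx
      rw [he, hfS (c', r') x hx] at e1
      have l1 := hc.val_lt hm hS x hx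
      have e2 : (c' x - j).val + (r' - r) ≡ (c x - j).val [MOD m] := by
        apply Nat.ModEq.add_right_cancel' r
        rw [add_assoc, Nat.sub_add_cancel hle]
        exact e1
      rw [← Nat.mod_eq_of_lt l1]
      exact e2.symm)
    omega
  have hinj : (G ×ˢ range m).card ≤ T.card := by
    refine card_le_card_of_injOn f ?_ ?_
    · intro p hp
      simp only [hT, mem_coe, Fintype.mem_piFinset]
      intro x
      by_cases hx : x ∈ S
      · simp only [if_pos hx, hA, mem_filter, mem_univ, true_and]
        rw [hfS p x hx]
        exact Nat.mod_lt _ (by omega)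
      · simp [hx]
    · rintro ⟨c, r⟩ hp ⟨c', r'⟩ hp' he
      simp only [coe_product, Set.mem_prod, mem_coe, hG, mem_filter, mem_univ, true_and,
        mem_range] at hp hp'
      have hrr : r = r' := by
        rcases le_total r r' with h | h
        · exact aux c c' r r' hp.1 hp'.1 hp'.2 h he
        · exact (aux c' c r' r hp'.1 hp.1 hp.2 h he.symm).symm
      subst hrr
      refine Prod.ext ?_ rfl
      funext x
      by_cases hx : x ∈ S
      · have e1 := hfS (c, r) x hx
        rw [he, hfS (c', r) x hx] at e1
        have e2 := Nat.ModEq.add_right_cancel' r e1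
        have e3 := Nat.ModEq.eq_of_lt_of_lt e2 (hp'.1.val_lt hm hS x hx)
          (hp.1.val_lt hm hS x hx)
        exact (sub_left_injective (ZMod.val_injective _ e3)).symm
      · have := congrFun he x
        simpa [hf, hx] using this
  rw [card_product, card_range] at hinj
  have : G.card * m ≤ m ^ m * (m + 1) ^ (n - (m + 1)) * m := by
    calc _ ≤ _ := hinj
      _ ≤ _ := hTcard
      _ = _ := by ring
  exact Nat.le_of_mul_le_mul_right this (by omega)

open Classical in
/-- The edges belonging to a colouring: the `(m+1)`-sets that are good from some colour. -/
noncomputable def goodEdges {n m : ℕ} (c : Fin n → ZMod (m + 1)) : Finset (Finset (Fin n)) :=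
  (univ.powersetCard (m + 1)).filter fun S => ∃ j, GoodFrom c j S

/-- First-moment argument over a uniformly random colouring. -/
lemma exists_coloring (n m : ℕ) (hm : 1 ≤ m) :
    ∃ c : Fin n → ZMod (m + 1),
      (m + 1) ^ n * (goodEdges c).card
        ≤ n.choose (m + 1) * ((m + 1) * (m ^ m * (m + 1) ^ (n - (m + 1)))) := by
  classical
  by_contra! hcon
  have h1 : ∑ c : Fin n → ZMod (m + 1), (goodEdges c).card
      ≤ n.choose (m + 1) * ((m + 1) * (m ^ m * (m + 1) ^ (n - (m + 1)))) := by
    have : ∀ S ∈ (univ : Finset (Fin n)).powersetCard (m + 1),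
        (univ.filter fun c : Fin n → ZMod (m + 1) => ∃ j, GoodFrom c j S).card
          ≤ (m + 1) * (m ^ m * (m + 1) ^ (n - (m + 1))) := by
      intro S hS
      have e : (univ.filter fun c : Fin n → ZMod (m + 1) => ∃ j, GoodFrom c j S)
          = univ.biUnion fun j => univ.filter fun c => GoodFrom c j S := by
        ext c; simp
      rw [e]
      refine (card_biUnion_le_card_mul _ _ _ fun j _ =>
        card_goodFrom_le hm j S (mem_powersetCard.1 hS).2).trans ?_
      rw [card_univ, ZMod.card]
    calc ∑ c : Fin n → ZMod (m + 1), (goodEdges c).card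
        = ∑ S ∈ (univ : Finset (Fin n)).powersetCard (m + 1),
          (univ.filter fun c : Fin n → ZMod (m + 1) => ∃ j, GoodFrom c j S).card := by
          simp only [goodEdges, card_filter]
          exact sum_comm
      _ ≤ _ := sum_le_card_nsmul _ _ _ this
      _ = _ := by simp
  have h2 : ∑ c : Fin n → ZMod (m + 1),
      n.choose (m + 1) * ((m + 1) * (m ^ m * (m + 1) ^ (n - (m + 1))))
      < ∑ c : Fin n → ZMod (m + 1), (m + 1) ^ n * (goodEdges c).card :=
    sum_lt_sum_of_nonempty univ_nonempty fun c _ => hcon c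
  rw [sum_const, card_univ, Fintype.card_fun, ZMod.card, Fintype.card_fin,
    smul_eq_mul, ← mul_sum] at h2
  exact absurd h1 (not_le.2 (lt_of_mul_lt_mul_left h2 (Nat.zero_le _)))

lemma mem_goodEdges {n m : ℕ} {c : Fin n → ZMod (m + 1)} {S : Finset (Fin n)} :
    S ∈ goodEdges c ↔ S.card = m + 1 ∧ ∃ j, GoodFrom c j S := by
  simp [goodEdges, mem_powersetCard]

lemma secE_goodEdges {n m : ℕ} (c : Fin n → ZMod (m + 1)) :
    secE (m + 1) (goodEdges c) = goodEdges c := by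
  have hcard : ∀ E ∈ goodEdges c, E.card = m + 1 := fun E hE =>
    (mem_goodEdges.1 hE).1
  ext S
  simp only [secE, mem_biUnion, mem_powersetCard]
  constructor
  · rintro ⟨E, hE, hSE, hS⟩
    rwa [eq_of_subset_of_card_le hSE (by rw [hS, hcard E hE])]
  · intro hS
    exact ⟨S, hS, subset_rfl, hcard S hS⟩

lemma zeroE_goodEdges {n m : ℕ} (c : Fin n → ZMod (m + 1)) :
    zeroE univ (m + 1) (goodEdges c) = ∅ := by
  refine eq_empty_of_forall_notMem fun F hF' => ?_
  simp only [zeroE, mem_filter] at hF'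
  obtain ⟨hF, hno⟩ := hF'
  obtain ⟨S, hSF, hS, hj⟩ := exists_good_subset c F (mem_powersetCard.1 hF).2
  refine hno S (mem_powersetCard.2 ⟨hSF, hS⟩) ?_
  rw [secE_goodEdges]
  exact mem_goodEdges.2 ⟨hS, hj⟩

lemma hSum_goodEdges {n m : ℕ} (c : Fin n → ZMod (m + 1)) :
    hSum n (m + 1) (goodEdges c) = (goodEdges c).card * ((n.choose (m + 1) : ℝ))⁻¹ := by
  rw [hSum, secE_goodEdges, zeroE_goodEdges, union_empty, ← nsmul_eq_mul, ← sum_const]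
  refine sum_congr rfl fun S hS => ?_
  rw [(mem_goodEdges.1 hS).1]

lemma s'Val_le (n m : ℕ) (hm : 1 ≤ m) (hn : m + 1 ≤ n) :
    s'Val n (m + 1) ≤ (1 - 1 / ((m + 1 : ℕ) : ℝ)) ^ m := by
  obtain ⟨c, hc⟩ := exists_coloring n m hm
  have hle : s'Val n (m + 1) ≤ hSum n (m + 1) (goodEdges c) := by
    refine csInf_le ⟨0, ?_⟩ ⟨_, rfl⟩
    rintro _ ⟨𝓔, rfl⟩
    exact sum_nonneg fun _ _ => by positivity
  refine hle.trans ?_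
  have hC : (0 : ℝ) < n.choose (m + 1) := by exact_mod_cast Nat.choose_pos hn
  have hm0 : (0 : ℝ) < (m : ℝ) + 1 := by positivity
  rw [hSum_goodEdges, ← div_eq_mul_inv, div_le_iff₀ hC]
  have e : (1 - 1 / ((m + 1 : ℕ) : ℝ)) = m / ((m : ℝ) + 1) := by
    push_cast; field_simp; ring
  rw [e, div_pow, div_mul_eq_mul_div, le_div_iff₀ (by positivity)]
  obtain ⟨d, rfl⟩ := Nat.exists_eq_add_of_le hn
  rw [Nat.add_sub_cancel_left] at hc
  have hcR : ((m : ℝ) + 1) ^ (m + 1 + d) * ((goodEdges c).card : ℝ)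
      ≤ ((m + 1 + d).choose (m + 1) : ℝ) * (((m : ℝ) + 1) * ((m : ℝ) ^ m * ((m : ℝ) + 1) ^ d)) := by
    exact_mod_cast hc
  refine le_of_mul_le_mul_left ?_ (by positivity : (0 : ℝ) < ((m : ℝ) + 1) ^ (d + 1))
  calc _ = ((m : ℝ) + 1) ^ (m + 1 + d) * ((goodEdges c).card : ℝ) := by ring
    _ ≤ _ := hcR
    _ = _ := by ring

theorem limit_s'_le (k : ℕ) (hk : 3 ≤ k) (L' : ℝ)
    (hL' : Filter.Tendsto (fun n => s'Val n k) Filter.atTop (nhds L')) :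
    L' ≤ (1 - 1 / (k : ℝ)) ^ (k - 1) := by
  obtain ⟨m, rfl⟩ : ∃ m, k = m + 1 := ⟨k - 1, by omega⟩
  refine le_of_tendsto hL' ?_
  filter_upwards [Filter.eventually_ge_atTop (m + 1)] with n hn
  exact s'Val_le n m (by omega) hn
end

section
/- For every integer n ≥ 3, s(n, 2) = s'(n, 2) = 1 − ⌊n²/4⌋ / C(n, 2). -/
/-!
Let `G` be the graph on `Fin n` whose edges are the pairs not contained in an edge of `𝓔`, and let
`e` and `t` be its numbers of edges and triangles. Then `hSum n 2 𝓔 = (C(n,2) - e) / C(n,2) +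
t / C(n,3)`, and since `3 C(n,3) = (n - 2) C(n,2)`, the lower bound says
`3 t ≥ (n - 2) (e - ⌊n²/4⌋)`.

This follows from Goodman's bound `3 t ≥ ∑ d(v)² - n e`, obtained by counting common neighbours of
the two ends of each edge, together with the integrality of the degrees: with `k = ⌊n/2⌋` no integer
lies strictly between `k` and `n - k`, so `∑ (d(v) - k) (d(v) - (n - k)) ≥ 0`, which rearranges to
`∑ d(v)² ≥ 2 n e - n ⌊n²/4⌋`. Hence `3 t ≥ n (e - ⌊n²/4⌋)`. All counts are done on
ordered pairs and triples (`card_ordered_pairs_le`, `card_ordered_triples_le`).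

Equality holds for the hypergraph whose two edges are complementary vertex sets of sizes `⌊n/2⌋`
and `⌈n/2⌉`: it is 1-linear, and `G` is complete bipartite, hence triangle-free.
-/

open Finset

/-! ### Counting ordered pairs and triples -/

lemma card_ordered_pairs_le {n : ℕ} (𝓕 : Finset (Finset (Fin n))) :
    #{x : Fin n × Fin n | x.1 ≠ x.2 ∧ ({x.1, x.2} : Finset (Fin n)) ∈ 𝓕} ≤ 2 * #𝓕 := by
  apply card_le_mul_card_image_of_maps_to (f := fun x : Fin n × Fin n => ({x.1, x.2} : Finset (Fin n)))
  · intro x hx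
    simp only [mem_filter, mem_univ, true_and] at hx
    exact hx.2
  · intro F _
    rcases Finset.eq_empty_or_nonempty
      ({x ∈ {x : Fin n × Fin n | x.1 ≠ x.2 ∧ ({x.1, x.2} : Finset (Fin n)) ∈ 𝓕} |
        ({x.1, x.2} : Finset (Fin n)) = F}) with h | ⟨⟨a, b⟩, h⟩
    · rw [h]; simp
    · simp only [mem_filter, mem_univ, true_and] at h
      obtain ⟨⟨hab, -⟩, rfl⟩ := h
      refine (card_le_card (t := {(a, b), (b, a)}) ?_).trans card_le_two
      rintro ⟨c, d⟩ hx
      simp only [mem_filter, mem_univ, true_and] at hx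
      obtain ⟨⟨hcd, -⟩, h2⟩ := hx
      have hc : c ∈ ({a, b} : Finset (Fin n)) := h2 ▸ by simp
      have hd : d ∈ ({a, b} : Finset (Fin n)) := h2 ▸ by simp
      simp only [mem_insert, mem_singleton, Prod.mk.injEq] at *
      grind

lemma card_ordered_triples_le {n : ℕ} (𝓕 : Finset (Finset (Fin n))) :
    #{x : Fin n × Fin n × Fin n | x.1 ≠ x.2.1 ∧ x.1 ≠ x.2.2 ∧ x.2.1 ≠ x.2.2 ∧
      ({x.1, x.2.1, x.2.2} : Finset (Fin n)) ∈ 𝓕} ≤ 6 * #𝓕 := by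
  apply card_le_mul_card_image_of_maps_to
    (f := fun x : Fin n × Fin n × Fin n => ({x.1, x.2.1, x.2.2} : Finset (Fin n)))
  · intro x hx
    simp only [mem_filter, mem_univ, true_and] at hx
    exact hx.2.2.2
  · intro F _
    rcases Finset.eq_empty_or_nonempty
      ({x ∈ {x : Fin n × Fin n × Fin n | x.1 ≠ x.2.1 ∧ x.1 ≠ x.2.2 ∧ x.2.1 ≠ x.2.2 ∧
        ({x.1, x.2.1, x.2.2} : Finset (Fin n)) ∈ 𝓕} |
        ({x.1, x.2.1, x.2.2} : Finset (Fin n)) = F}) with h | ⟨⟨a, b, c⟩, h⟩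
    · rw [h]; simp
    · simp only [mem_filter, mem_univ, true_and] at h
      obtain ⟨-, rfl⟩ := h
      refine (card_le_card (t := {(a, b, c), (a, c, b), (b, a, c), (b, c, a), (c, a, b),
        (c, b, a)}) ?_).trans card_le_six
      rintro ⟨x, y, z⟩ hx
      simp only [mem_filter, mem_univ, true_and] at hx
      obtain ⟨⟨h1, h2, h3, -⟩, h4⟩ := hx
      have hx : x ∈ ({a, b, c} : Finset (Fin n)) := h4 ▸ by simp
      have hy : y ∈ ({a, b, c} : Finset (Fin n)) := h4 ▸ by simp
      have hz : z ∈ ({a, b, c} : Finset (Fin n)) := h4 ▸ by simp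
      simp only [mem_insert, mem_singleton, Prod.mk.injEq] at *
      grind

/-! ### Goodman's bound -/

lemma sq_div_four (n : ℕ) :
    ((n ^ 2 / 4 : ℕ) : ℤ) = ((n / 2 : ℕ) : ℤ) * (n - (n / 2 : ℕ)) := by
  rcases Nat.even_or_odd' n with ⟨m, rfl | rfl⟩
  · have : (2 * m) ^ 2 / 4 = m * m := by
      rw [show (2 * m) ^ 2 = (m * m) * 4 by ring]; simp
    rw [this, show 2 * m / 2 = m by omega]; push_cast; ring
  · have : (2 * m + 1) ^ 2 / 4 = m * (m + 1) := by
      rw [show (2 * m + 1) ^ 2 = 1 + (m * (m + 1)) * 4 by ring]; omega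
    rw [this, show (2 * m + 1) / 2 = m by omega]; push_cast; ring

/-- Goodman's bound with integral degrees, for a symmetric 0/1 matrix: if `S` is the sum of the
entries, the number of ordered triples of pairwise related indices is at least `n * S - 2 * n * ⌊n²/4⌋`. -/
lemma goodman {n : ℕ} (A : Fin n → Fin n → ℤ) (hA : ∀ u v, A u v = 0 ∨ A u v = 1)
    (hs : ∀ u v, A u v = A v u) :
    n * (∑ u, ∑ v, A u v) - 2 * n * ((n ^ 2 / 4 : ℕ) : ℤ)
      ≤ ∑ u, ∑ v, ∑ w, A u v * A u w * A v w := by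
  set d : Fin n → ℤ := fun u => ∑ v, A u v with hd
  have h1 : ∑ u, ∑ v, ∑ w, A u v * (A u w + A v w - 1)
      ≤ ∑ u, ∑ v, ∑ w, A u v * A u w * A v w := by
    refine sum_le_sum fun u _ => sum_le_sum fun v _ => sum_le_sum fun w _ => ?_
    rcases hA u v with h | h <;> rcases hA u w with h' | h' <;> rcases hA v w with h'' | h'' <;>
      simp [h, h', h'']
  have h2 : ∑ u, ∑ v, ∑ w, A u v * (A u w + A v w - 1)
      = 2 * ∑ u, d u ^ 2 - n * ∑ u, d u := by
    have e1 : ∀ u v, ∑ w, A u v * (A u w + A v w - 1)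
        = A u v * d u + A u v * d v - n * A u v := by
      intro u v
      rw [← mul_sum, sum_sub_distrib, sum_add_distrib]
      simp [hd]; ring
    simp only [e1, sum_sub_distrib, sum_add_distrib, ← mul_sum]
    have e2 : ∑ u, ∑ v, A u v * d u = ∑ u, d u ^ 2 := by
      refine sum_congr rfl fun u _ => ?_
      rw [← sum_mul, sq]
    have e3 : ∑ u, ∑ v, A u v * d v = ∑ u, d u ^ 2 := by
      rw [sum_comm, ← e2]
      exact sum_congr rfl fun u _ => sum_congr rfl fun v _ => by rw [hs]
    rw [e2, e3]; ring
  have hq := sq_div_four n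
  have h3 : 0 ≤ ∑ u, (d u - (n / 2 : ℕ)) * (d u - (n - (n / 2 : ℕ))) := by
    refine sum_nonneg fun u _ => ?_
    rcases le_or_gt (d u) ((n / 2 : ℕ) : ℤ) with h | h
    · exact mul_nonneg_of_nonpos_of_nonpos (by omega) (by omega)
    · exact mul_nonneg (by omega) (by omega)
  have h4 : ∑ u, (d u - (n / 2 : ℕ)) * (d u - (n - (n / 2 : ℕ)))
      = ∑ u, d u ^ 2 - n * ∑ u, d u + n * ((n ^ 2 / 4 : ℕ) : ℤ) := by
    have : ∀ u, (d u - (n / 2 : ℕ)) * (d u - (n - (n / 2 : ℕ)))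
        = d u ^ 2 - n * d u + ((n ^ 2 / 4 : ℕ) : ℤ) := by
      intro u; rw [hq]; ring
    simp only [this, sum_add_distrib, sum_sub_distrib, ← mul_sum]
    simp
  have h5 : ∑ u, ∑ v, A u v = ∑ u, d u := rfl
  rw [h5]
  linarith

/-! ### The lower bound -/

lemma card_of_mem_secE {n k : ℕ} {𝓔 : Finset (Finset (Fin n))} {F : Finset (Fin n)}
    (h : F ∈ secE k 𝓔) : #F = k := by
  simp only [secE, mem_biUnion, mem_powersetCard] at h
  obtain ⟨_, _, _, h⟩ := h
  exact h

lemma card_of_mem_zeroE {n k : ℕ} {𝓔 : Finset (Finset (Fin n))} {F : Finset (Fin n)}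
    (h : F ∈ zeroE univ k 𝓔) : #F = k + 1 := by
  simp only [zeroE, mem_filter, mem_powersetCard] at h
  exact h.1.2

lemma hSum_two (n : ℕ) (𝓔 : Finset (Finset (Fin n))) :
    hSum n 2 𝓔 = #(secE 2 𝓔) / (n.choose 2 : ℝ) + #(zeroE univ 2 𝓔) / (n.choose 3 : ℝ) := by
  have hdis : Disjoint (secE 2 𝓔) (zeroE univ 2 𝓔) := by
    rw [Finset.disjoint_left]
    intro F h1 h2
    have := card_of_mem_secE h1
    have := card_of_mem_zeroE h2
    omega
  rw [hSum, sum_union hdis, sum_congr rfl fun F hF => by rw [card_of_mem_secE hF],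
    sum_congr (s₁ := zeroE univ 2 𝓔) rfl fun F hF => by rw [card_of_mem_zeroE hF]]
  simp [div_eq_mul_inv]

/-- The graph of pairs not covered by `𝓔`: with `S` twice its number of edges and `zeroE` its set
of triangles, complementary counting of pairs and Goodman's bound. -/
lemma exists_edge_count (n : ℕ) (𝓔 : Finset (Finset (Fin n))) :
    ∃ S : ℤ, (n : ℤ) * n - n - S ≤ 2 * #(secE 2 𝓔) ∧
      n * S - 2 * n * ((n ^ 2 / 4 : ℕ) : ℤ) ≤ 6 * #(zeroE univ 2 𝓔) := by
  classical
  set A : Fin n → Fin n → ℤ := fun u v => if u ≠ v ∧ {u, v} ∉ secE 2 𝓔 then 1 else 0 with hA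
  refine ⟨∑ u, ∑ v, A u v, ?_, ?_⟩
  · have h := card_ordered_pairs_le (secE 2 𝓔)
    zify at h
    refine le_trans (le_of_eq ?_) h
    rw [card_filter]
    push_cast
    rw [Fintype.sum_prod_type, sub_eq_iff_eq_add, ← sum_add_distrib]
    simp only [← sum_add_distrib]
    have : ∀ u v : Fin n, ((if u ≠ v ∧ ({u, v} : Finset (Fin n)) ∈ secE 2 𝓔 then 1 else 0) + A u v : ℤ)
        = 1 - if u = v then 1 else 0 := by
      intro u v
      simp only [hA]
      split_ifs <;> first | rfl | (exfalso; tauto)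
    simp only [this, sum_sub_distrib]
    simp
  · refine (goodman A (fun u v => ?_) (fun u v => ?_)).trans ?_
    · simp only [hA]; split_ifs <;> simp
    · simp only [hA, Finset.pair_comm u v, ne_comm (a := u)]
    · have h := card_ordered_triples_le (zeroE univ 2 𝓔)
      zify at h
      refine le_trans ?_ h
      rw [card_filter]
      push_cast
      simp only [Fintype.sum_prod_type]
      refine sum_le_sum fun u _ => sum_le_sum fun v _ => sum_le_sum fun w _ => ?_
      simp only [hA, ← ite_and, mul_ite, mul_one, mul_zero]
      split_ifs with h1 h2 <;> try norm_num
      obtain ⟨⟨huw, huw'⟩, ⟨huv, huv'⟩⟩ | h1 := em ((u ≠ w ∧ {u, w} ∉ secE 2 𝓔) ∧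
        (u ≠ v ∧ {u, v} ∉ secE 2 𝓔))
      · have hvw : v ≠ w ∧ {v, w} ∉ secE 2 𝓔 := by tauto
        apply h2
        refine ⟨huv, huw, hvw.1, ?_⟩
        simp only [zeroE, mem_filter, mem_powersetCard, subset_univ, true_and]
        refine ⟨card_eq_three.2 ⟨u, v, w, huv, huw, hvw.1, rfl⟩, ?_⟩
        rintro G ⟨hG, hG2⟩
        obtain ⟨a, b, hab, rfl⟩ := card_eq_two.1 hG2
        have ha := hG (mem_insert_self a _)
        have hb := hG (mem_insert_of_mem (mem_singleton_self b))
        simp only [mem_insert, mem_singleton] at ha hb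
        rcases ha with rfl | rfl | rfl <;> rcases hb with rfl | rfl | rfl <;>
          first
          | exact absurd rfl hab
          | assumption
          | exact hvw.2
          | (rw [Finset.pair_comm]; first | assumption | exact hvw.2)
      · tauto

lemma two_mul_choose_two_cast (m : ℕ) : 2 * (m.choose 2 : ℝ) = m * m - m := by
  rw [Nat.cast_choose_two]; ring

lemma le_hSum (n : ℕ) (hn : 3 ≤ n) (𝓔 : Finset (Finset (Fin n))) :
    1 - ((n ^ 2 / 4 : ℕ) : ℝ) / (n.choose 2 : ℝ) ≤ hSum n 2 𝓔 := by
  obtain ⟨S, h1, h2⟩ := exists_edge_count n 𝓔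
  rw [hSum_two]
  have h1' : (n : ℝ) * n - n - S ≤ 2 * #(secE 2 𝓔) := by exact_mod_cast h1
  have h2' : (n : ℝ) * S - 2 * n * ((n ^ 2 / 4 : ℕ) : ℝ) ≤ 6 * #(zeroE univ 2 𝓔) := by
    have h := (Int.cast_le (R := ℝ)).2 h2
    simpa only [Int.cast_sub, Int.cast_mul, Int.cast_natCast, Int.cast_ofNat] using h
  have hc2 := two_mul_choose_two_cast n
  have hn' : (3 : ℝ) ≤ n := by exact_mod_cast hn
  have hc3 : (n.choose 3 : ℝ) * 3 = n.choose 2 * (n - 2) := by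
    have := Nat.choose_succ_right_eq n 2
    have h := congrArg (Nat.cast : ℕ → ℝ) this
    rw [Nat.cast_mul, Nat.cast_mul, Nat.cast_sub (by omega)] at h
    norm_num at h
    exact h
  have hpos : (0 : ℝ) < n.choose 2 := by
    exact_mod_cast Nat.choose_pos (by omega)
  have hn2 : (0 : ℝ) < n - 2 := by linarith
  have hc3' : (n.choose 3 : ℝ) = n.choose 2 * ((n - 2) / 3) := by linarith
  generalize ((n ^ 2 / 4 : ℕ) : ℝ) = q at *
  have ht : (0 : ℝ) ≤ #(zeroE univ 2 𝓔) := by positivity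
  generalize (#(zeroE univ 2 𝓔) : ℝ) = t at *
  generalize (#(secE 2 𝓔) : ℝ) = p at *
  -- the excess `S / 2 - q` of edges over the bound, if positive, is paid for by triangles
  have key : S / 2 - q ≤ t / ((n - 2) / 3) := by
    rw [le_div_iff₀ (by positivity)]
    rcases le_or_gt ((S : ℝ) / 2 - q) 0 with h | h
    · nlinarith
    · nlinarith
  have e1 : (1 : ℝ) - q / n.choose 2 = (n.choose 2 - q) / n.choose 2 := by
    field_simp
  have e2 : p / n.choose 2 + t / (n.choose 3 : ℝ)
      = (p + t / ((n - 2) / 3)) / n.choose 2 := by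
    rw [hc3']; field_simp
  rw [e1, e2]
  gcongr
  linarith

/-! ### The extremal hypergraph -/

/-- Two complementary edges of sizes `⌊n/2⌋` and `⌈n/2⌉` attain the bound. -/
lemma exists_hSum_le (n : ℕ) (hn : 3 ≤ n) : ∃ 𝓔 : Finset (Finset (Fin n)), qLinear 1 𝓔 ∧
    hSum n 2 𝓔 ≤ 1 - ((n ^ 2 / 4 : ℕ) : ℝ) / (n.choose 2 : ℝ) := by
  obtain ⟨X, -, hX⟩ := exists_subset_card_eq (s := (univ : Finset (Fin n))) (n := n / 2)
    (by simp; omega)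
  have hXc : #Xᶜ = n - n / 2 := by rw [card_compl, hX, Fintype.card_fin]
  refine ⟨{X, Xᶜ}, ?_, ?_⟩
  · intro E hE E' hE' hne
    simp only [mem_insert, mem_singleton] at hE hE'
    rcases hE with rfl | rfl <;> rcases hE' with rfl | rfl <;>
      simp_all [inter_comm]
  have hz : zeroE univ 2 {X, Xᶜ} = ∅ := by
    rw [eq_empty_iff_forall_notMem]
    intro F hF
    have hF3 := card_of_mem_zeroE hF
    simp only [zeroE, mem_filter] at hF
    have hcov : ∀ Y ∈ ({X, Xᶜ} : Finset (Finset (Fin n))), #(F ∩ Y) < 2 := by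
      intro Y hY
      by_contra! hc
      obtain ⟨G, hG, hG2⟩ := exists_subset_card_eq hc
      refine hF.2 G (mem_powersetCard.2 ⟨hG.trans inter_subset_left, hG2⟩) ?_
      exact mem_biUnion.2 ⟨Y, hY, mem_powersetCard.2 ⟨hG.trans inter_subset_right, hG2⟩⟩
    have a := hcov X (by simp)
    have b := hcov Xᶜ (by simp)
    have c := card_inter_add_card_sdiff F X
    rw [sdiff_eq_inter_compl] at c
    omega
  have hs : #(secE 2 {X, Xᶜ}) ≤ (n / 2).choose 2 + (n - n / 2).choose 2 := by
    have : secE 2 {X, Xᶜ} = X.powersetCard 2 ∪ Xᶜ.powersetCard 2 := by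
      simp [secE, biUnion_insert]
    rw [this]
    refine (card_union_le _ _).trans ?_
    rw [card_powersetCard, card_powersetCard, hX, hXc]
  have hs' : (#(secE 2 {X, Xᶜ}) : ℝ) ≤ n.choose 2 - ((n ^ 2 / 4 : ℕ) : ℝ) := by
    have h1 : (#(secE 2 {X, Xᶜ}) : ℝ) ≤ (n / 2).choose 2 + (n - n / 2).choose 2 := by
      exact_mod_cast hs
    have a1 := two_mul_choose_two_cast (n / 2)
    have a2 := two_mul_choose_two_cast (n - n / 2)
    have a3 := two_mul_choose_two_cast n
    have hq : ((n ^ 2 / 4 : ℕ) : ℝ) = ((n / 2 : ℕ) : ℝ) * (n - (n / 2 : ℕ)) := by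
      have h := congrArg (Int.cast : ℤ → ℝ) (sq_div_four n)
      simpa only [Int.cast_sub, Int.cast_mul, Int.cast_natCast] using h
    rw [Nat.cast_sub (by omega)] at a2
    rw [hq]
    nlinarith
  have hpos : (0 : ℝ) < n.choose 2 := by
    exact_mod_cast Nat.choose_pos (by omega)
  rw [hSum_two, hz]
  have e1 : (1 : ℝ) - ((n ^ 2 / 4 : ℕ) : ℝ) / n.choose 2
      = (n.choose 2 - ((n ^ 2 / 4 : ℕ) : ℝ)) / n.choose 2 := by
    field_simp
  rw [e1]
  simp only [card_empty, Nat.cast_zero, zero_div, add_zero]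
  gcongr

theorem s_n_two (n : ℕ) (hn : 3 ≤ n) :
    sVal n 2 = 1 - ((n ^ 2 / 4 : ℕ) : ℝ) / (n.choose 2 : ℝ) ∧
    s'Val n 2 = 1 - ((n ^ 2 / 4 : ℕ) : ℝ) / (n.choose 2 : ℝ) := by
  obtain ⟨𝓔, hlin, hle⟩ := exists_hSum_le n hn
  have heq := le_antisymm (le_hSum n hn 𝓔) hle
  constructor
  · refine IsLeast.csInf_eq ⟨⟨𝓔, hlin, heq⟩, ?_⟩
    rintro r ⟨𝓔', -, rfl⟩
    exact le_hSum n hn 𝓔'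
  · refine IsLeast.csInf_eq ⟨⟨𝓔, heq⟩, ?_⟩
    rintro r ⟨𝓔', rfl⟩
    exact le_hSum n hn 𝓔'
end

section
/- Let k ≥ 3 and let H = (X, 𝓔) be a (k−1)-linear hypergraph in which every edge has at least k vertices. Let H be a k-element subset of X with H ∉ 𝓔_k. For each x ∈ H, define E_x to be the (unique, by (k−1)-linearity) edge of 𝓔 containing H∖{x} if such an edge exists, and E_x := H∖{x} otherwise; set H* := ∪_{x∈H} E_x. Then for every vertex z ∈ X∖H*, the set H ∪ {z} belongs to 𝓔⁰_{k+1}. -/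
open Finset

theorem extend_outside_Hstar (n k : ℕ) (hk : 3 ≤ k)
    (𝓔 : Finset (Finset (Fin n))) (hlin : qLinear (k - 1) 𝓔)
    (hedge : ∀ E ∈ 𝓔, k ≤ E.card)
    (H : Finset (Fin n)) (hHcard : H.card = k) (hH : H ∉ secE k 𝓔)
    (z : Fin n) (hzH : z ∉ H)
    (hzstar : ∀ x ∈ H, ∀ E ∈ 𝓔, H \ {x} ⊆ E → z ∉ E) :
    insert z H ∈ zeroE Finset.univ k 𝓔 := by
  simp only [secE, mem_biUnion, mem_powersetCard, not_exists, not_and] at hH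
  simp only [zeroE, secE, mem_filter, mem_powersetCard, mem_biUnion, not_exists, not_and]
  refine ⟨⟨subset_univ _, by rw [card_insert_of_notMem hzH, hHcard]⟩, ?_⟩
  rintro G ⟨hG, hGk⟩ E hE hGE hGcard
  by_cases hz : z ∈ G
  · -- `G` misses exactly one vertex `x` of `insert z H`; it lies in `H`, and `H \ {x} ⊆ G ⊆ E`.
    have hcard : (insert z H \ G).card = 1 := by
      rw [card_sdiff_of_subset hG, card_insert_of_notMem hzH]
      omega
    obtain ⟨x, hx⟩ := card_eq_one.mp hcard
    have hmem : ∀ y, y ∈ insert z H \ G ↔ y = x := fun y => by rw [hx, mem_singleton]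
    have hxm := (hmem x).mpr rfl
    refine hzstar x (by grind) E hE (fun y hy => hGE ?_) (hGE hz)
    have := hmem y
    grind
  · -- A `k`-set inside `insert z H` avoiding `z` is `H` itself.
    have hGH : G = H :=
      eq_of_subset_of_card_le ((subset_insert_iff_of_notMem hz).mp hG) (by omega)
    exact hH E hE (hGH ▸ hGE) hHcard
end

section
/- Let k ≥ 3 and let H = (X, 𝓔) be a (k−1)-linear hypergraph on n vertices in which every edge has at least k vertices. For a k-element set H ∉ 𝓔_k and x ∈ H, let E_x be the unique edge of 𝓔 containing H∖{x} if one exists and H∖{x} otherwise, and let H* := ∪_{x∈H} E_x; call H a near-cover if |H*| ≥ n − k. If no k-element set H ∈ C(X,k)∖𝓔_k is a near-cover, then |𝓔⁰_{k+1}| ≥ |C(X,k)∖𝓔_k|, and consequently |𝓔_k| + |𝓔⁰_{k+1}| ≥ C(n, k). -/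
/-!
The proof double counts pairs `H ⊂ F` with `H` a `k`-set outside `𝓔_k` and `F ∈ 𝓔⁰_{k+1}`.
If `v ∉ H*`, then `H ∪ {v} ∈ 𝓔⁰_{k+1}`: any other `k`-subset has the form `(H ∖ {x}) ∪ {v}`, and an
edge containing it would contain `H ∖ {x}`, placing `v` in `H*` (`insert_mem_zeroE`). When `H` is
not a near-cover there are at least `k + 1` such `v`, whereas each `F` has only `k + 1` subsets of
size `k`.
-/

open Finset

/-- `H*`: the union, over `x ∈ H`, of `E_x`, where `E_x` is an edge containing
`H \ {x}` when one exists, and `H \ {x}` itself otherwise. (Equivalently: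
`H` together with all edges containing `H \ {x}` for some `x ∈ H`.) -/
def Hstar {α : Type*} [DecidableEq α] (𝓔 : Finset (Finset α)) (H : Finset α) :
    Finset α :=
  H ∪ (𝓔.filter fun E => ∃ x ∈ H, H \ {x} ⊆ E).biUnion id

/-- `H` is a near-cover if `|H*| ≥ n - k`. -/
def NearCover (n k : ℕ) (𝓔 : Finset (Finset (Fin n))) (H : Finset (Fin n)) : Prop :=
  n - k ≤ (Hstar 𝓔 H).card

/-- Adding a vertex outside `H*` to a `k`-set `H ∉ 𝓔_k` gives a member of `𝓔⁰_{k+1}`. -/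
theorem insert_mem_zeroE {n k : ℕ} {𝓔 : Finset (Finset (Fin n))} {H : Finset (Fin n)}
    (hH : H.card = k) (hHE : H ∉ secE k 𝓔) {v : Fin n} (hv : v ∉ Hstar 𝓔 H) :
    insert v H ∈ zeroE Finset.univ k 𝓔 := by
  have hvH : v ∉ H := fun h => hv (mem_union_left _ h)
  simp only [zeroE, mem_filter, mem_powersetCard, subset_univ, true_and]
  refine ⟨by rw [card_insert_of_notMem hvH, hH], ?_⟩
  rintro G ⟨hGF, hGk⟩ hGE
  by_cases hvG : v ∈ G
  · simp only [secE, mem_biUnion, mem_powersetCard] at hGE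
    obtain ⟨E, hE, hGE, -⟩ := hGE
    -- `G` has the same size as `H` and contains `v ∉ H`, so it misses some `x ∈ H`.
    obtain ⟨x, hxH, hxG⟩ : ∃ x ∈ H, x ∉ G := by
      by_contra! hsub
      have hHG : H = G := eq_of_subset_of_card_le hsub (by omega)
      exact hvH (hHG ▸ hvG)
    have hx : x ∈ insert v H := mem_insert_of_mem hxH
    have hGeq : G = (insert v H).erase x := by
      refine eq_of_subset_of_card_le (fun y hy => mem_erase.2 ⟨?_, hGF hy⟩) ?_
      · rintro rfl
        exact hxG hy
      · rw [card_erase_of_mem hx, card_insert_of_notMem hvH]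
        omega
    simp only [Hstar, mem_union, mem_biUnion, mem_filter, id] at hv
    refine hv (Or.inr ⟨E, ⟨hE, x, hxH, ?_⟩, hGE hvG⟩)
    intro y hy
    rw [mem_sdiff, mem_singleton] at hy
    exact hGE (hGeq ▸ mem_erase.2 ⟨hy.2, mem_insert_of_mem hy.1⟩)
  · have hGH : G = H :=
      eq_of_subset_of_card_le ((subset_insert_iff_of_notMem hvG).1 hGF) (by omega)
    exact hHE (hGH ▸ hGE)

theorem no_near_cover_case (n k : ℕ) (hk : 3 ≤ k)
    (𝓔 : Finset (Finset (Fin n))) (hlin : qLinear (k - 1) 𝓔)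
    (hedge : ∀ E ∈ 𝓔, k ≤ E.card)
    (hnc : ∀ H ∈ Finset.univ.powersetCard k (α := Fin n),
      H ∉ secE k 𝓔 → ¬ NearCover n k 𝓔 H) :
    ((Finset.univ.powersetCard k (α := Fin n)) \ secE k 𝓔).card ≤
        (zeroE Finset.univ k 𝓔).card ∧
    n.choose k ≤ (secE k 𝓔).card + (zeroE Finset.univ k 𝓔).card := by
  have key : ((Finset.univ.powersetCard k (α := Fin n)) \ secE k 𝓔).card ≤
      (zeroE Finset.univ k 𝓔).card := by
    refine Nat.le_of_mul_le_mul_right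
      (card_mul_le_card_mul (m := k + 1) (n := k + 1) (fun H F => H ⊆ F) ?_ ?_) k.succ_pos
    · intro H hH
      rw [mem_sdiff] at hH
      have hHk := (mem_powersetCard.1 hH.1).2
      have hlt := hnc H hH.1 hH.2
      rw [NearCover, not_le] at hlt
      have hcompl : k + 1 ≤ (Hstar 𝓔 H)ᶜ.card := by
        rw [card_compl, Fintype.card_fin]
        omega
      refine hcompl.trans (card_le_card_of_injOn (fun v => insert v H) ?_ ?_)
      · intro v hv
        rw [mem_coe, mem_compl] at hv
        exact mem_coe.2 ((mem_bipartiteAbove _).2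
          ⟨insert_mem_zeroE hHk hH.2 hv, subset_insert _ _⟩)
      · intro v hv w _ hvw
        rw [mem_coe, mem_compl] at hv
        have hvH : v ∉ H := fun h => hv (mem_union_left _ h)
        have hvw' : v ∈ insert w H := by
          have := mem_insert_self v H
          rwa [show insert v H = insert w H from hvw] at this
        exact (mem_insert.1 hvw').resolve_right hvH
    · intro F hF
      simp only [zeroE, mem_filter, mem_powersetCard] at hF
      have hFk : F.card = k + 1 := hF.1.2
      calc _ ≤ (F.powersetCard k).card := by
            refine card_le_card fun H hH => ?_
            rw [mem_bipartiteBelow, mem_sdiff, mem_powersetCard] at hH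
            exact mem_powersetCard.2 ⟨hH.2, hH.1.1.2⟩
        _ = k + 1 := by rw [card_powersetCard, hFk, Nat.choose_succ_self_right]
  refine ⟨key, ?_⟩
  have hsplit := card_le_card_sdiff_add_card (s := Finset.univ.powersetCard k (α := Fin n))
    (t := secE k 𝓔)
  rw [card_powersetCard, card_univ, Fintype.card_fin] at hsplit
  omega
end

section
/- Let H = (X, 𝓔) be a hypergraph on n vertices and k ≥ 2 an integer. For x ∈ X, let H_{−x} be the hypergraph on X∖{x} whose edges are the sets E∖{x} for E ∈ 𝓔 with |E∖{x}| ≥ k; write 𝓔_{k[−x]} and 𝓔⁰_{k+1[−x]} for the corresponding families in H_{−x}. Then Σ_{x∈X} |𝓔_{k[−x]}| = (n−k)·|𝓔_k| and Σ_{x∈X} |𝓔⁰_{k+1[−x]}| = (n−k−1)·|𝓔⁰_{k+1}|. -/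
/-!
Deleting `x` leaves exactly those members of `𝓔_k`, respectively `𝓔⁰_{k+1}`, that avoid `x`
(`secE_delV`, `zeroE_delV`). In a uniform family of `m`-sets every member avoids exactly `n - m`
of the `n` vertices, so double counting the pairs (vertex, member avoiding it) gives both sums
(`sum_card_filter_notMem`).
-/

open Finset

/-- The hypergraph `H₋ₓ` obtained by deleting vertex `x`: its edges are the
sets `E \ {x}` for `E ∈ 𝓔` that still have at least `k` vertices. -/
def delV {α : Type*} [DecidableEq α] (k : ℕ) (𝓔 : Finset (Finset α)) (x : α) :
    Finset (Finset α) :=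
  (𝓔.image fun E => E \ {x}).filter fun E => k ≤ E.card

theorem secE_delV {α : Type*} [DecidableEq α] (k : ℕ) (𝓔 : Finset (Finset α)) (x : α) :
    secE k (delV k 𝓔 x) = (secE k 𝓔).filter fun S => x ∉ S := by
  ext S
  simp only [secE, delV, mem_biUnion, mem_filter, mem_image, mem_powersetCard]
  constructor
  · rintro ⟨_, ⟨⟨E, hE, rfl⟩, -⟩, hS, hc⟩
    exact ⟨⟨E, hE, hS.trans sdiff_subset, hc⟩, fun hx => by simpa using hS hx⟩
  · rintro ⟨⟨E, hE, hS, hc⟩, hx⟩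
    have hS' : S ⊆ E \ {x} := subset_sdiff.2 ⟨hS, disjoint_singleton_right.2 hx⟩
    -- The size threshold in `delV` discards no edge that contains a `k`-set.
    exact ⟨E \ {x}, ⟨⟨E, hE, rfl⟩, hc ▸ card_le_card hS'⟩, hS', hc⟩

/-- Every `k`-subset of a set avoiding `x` avoids `x` itself, so on such sets the condition
defining `𝓔⁰_{k+1}` is the same before and after deleting `x`. -/
theorem zeroE_delV {α : Type*} [DecidableEq α] (V : Finset α) (k : ℕ)
    (𝓔 : Finset (Finset α)) (x : α) :
    zeroE (V \ {x}) k (delV k 𝓔 x) = (zeroE V k 𝓔).filter fun F => x ∉ F := by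
  ext F
  simp only [zeroE, secE_delV, mem_filter, mem_powersetCard, subset_sdiff,
    disjoint_singleton_right]
  constructor
  · rintro ⟨⟨⟨hV, hx⟩, hc⟩, h⟩
    exact ⟨⟨⟨hV, hc⟩, fun G hG hmem => h G hG ⟨hmem, fun hxG => hx (hG.1 hxG)⟩⟩, hx⟩
  · rintro ⟨⟨⟨hV, hc⟩, h⟩, hx⟩
    exact ⟨⟨⟨hV, hx⟩, hc⟩, fun G hG hmem => h G hG hmem.1⟩

theorem card_of_mem_zeroE_s18 {α : Type*} [DecidableEq α] {V : Finset α} {k : ℕ}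
    {𝓔 : Finset (Finset α)} {F : Finset α} (hF : F ∈ zeroE V k 𝓔) : F.card = k + 1 := by
  rw [zeroE, mem_filter, mem_powersetCard] at hF
  exact hF.1.2

theorem sum_card_filter_notMem {α : Type*} [Fintype α] [DecidableEq α] (m : ℕ)
    (A : Finset (Finset α)) (hA : ∀ S ∈ A, S.card = m) :
    (∑ x : α, (A.filter fun S => x ∉ S).card) = (Fintype.card α - m) * A.card := by
  have key := sum_card_bipartiteAbove_eq_sum_card_bipartiteBelow
    (s := (univ : Finset α)) (t := A) (fun x S => x ∉ S)
  simp only [bipartiteAbove, bipartiteBelow] at key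
  rw [key, mul_comm, ← smul_eq_mul]
  refine sum_eq_card_nsmul fun S hS => ?_
  rw [← hA S hS, ← card_compl]
  congr 1
  ext x
  simp

theorem deletion_counts (n k : ℕ) (hk : 2 ≤ k) (𝓔 : Finset (Finset (Fin n))) :
    (∑ x : Fin n, (secE k (delV k 𝓔 x)).card) = (n - k) * (secE k 𝓔).card ∧
    (∑ x : Fin n, (zeroE (Finset.univ \ {x}) k (delV k 𝓔 x)).card) =
      (n - k - 1) * (zeroE Finset.univ k 𝓔).card := by
  simp only [secE_delV, zeroE_delV]
  constructor
  · rw [sum_card_filter_notMem k, Fintype.card_fin]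
    intro S hS
    obtain ⟨E, -, hE⟩ := mem_biUnion.1 hS
    exact (mem_powersetCard.1 hE).2
  · rw [sum_card_filter_notMem (k + 1), Fintype.card_fin, Nat.sub_sub]
    exact fun F hF => card_of_mem_zeroE_s18 hF
end

section
/- For every n ≥ 8, the minimum of |𝓔_3| + |𝓔⁰_4| over all 2-linear (i.e., linear) hypergraphs H = (X, 𝓔) on n vertices equals C(n−2, 3) + C(n−3, 2) + 1, the minimum being attained by the linear hypergraph with two edges, one of size n−2 and the other of size 3, sharing exactly one vertex. -/
/-!
Two edges of a linear hypergraph that both meet a 4-set in at least three points coincide, since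
they share two points. Hence the triples in `𝓔_3` and the 4-sets outside `𝓔⁰_4` are both counted
edge by edge, and
`|𝓔_3| + |𝓔⁰_4| = C(n, 4) - ∑_E g(|E|)` with `g(k) = C(k, 4) + C(k, 3) (n - k - 1)`
(only `≥` is needed). The lower bound becomes `∑_E g(|E|) ≤ C(n - 1, 4) + (n - 4)`
(`sum_gain_le`), the right-hand side being `g(n - 2) + g(3)`.

Note that `12 g(k) = C(k - 1, 2) w(k)` with `w(k) = k (4 n - 3 k - 7)` (`twelve_gain`), and that
`w` is increasing up to about `2 n / 3`. Let `A` be a largest edge, `m = |A|`. Every other edge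
`E` has at least `|E| - 1` points outside `A`, and the pairs of points in the various `E \ A` are
distinct pairs of `Aᶜ`, so `∑_{E ≠ A} C(|E| - 1, 2) ≤ C(n - m, 2)` (`sum_pairs_le`). As moreover
`|E| ≤ K := min m (n - m + 1)` when `|E| ≥ 3`, and smaller edges have gain 0, one gets `12 ∑_E
g(|E|) ≤ 12 g(m) + C(n - m, 2) w(K)`, and what remains is a polynomial inequality in each of the
ranges `2 m ≤ n + 1` (`ineq_of_small_max`) and `2 m ≥ n + 2` (`ineq_of_large_max`). For `m ≤ 3`
the first of these fails when `n = 8`, and the bound `∑_E C(|E|, 2) ≤ C(n, 2)` is used instead.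

The extremal example only needs an upper bound: a 4-set in its `𝓔⁰_4` contains both points outside
the large edge and avoids the common point of the two edges.
-/

open Finset

/-! ### The gain function -/

/-- The amount by which an isolated edge of size `k` on `n` vertices lowers `|𝓔_3| + |𝓔⁰_4|`:
the number of 4-sets meeting it in at least three points, minus its number of triples. -/
def gain (n k : ℕ) : ℚ := (k.choose 4 : ℚ) + (k.choose 3 : ℚ) * ((n : ℚ) - k - 1)

/-- The weight `w(k)` such that `12 * gain n k = C(k - 1, 2) * w(k)`. -/
def weight (n k : ℕ) : ℚ := (k : ℚ) * (4 * n - 3 * k - 7)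

lemma cast_choose_three (k : ℕ) : (k.choose 3 : ℚ) = k * (k - 1) * (k - 2) / 6 := by
  induction k with
  | zero => simp
  | succ k ih =>
    rw [Nat.choose_succ_succ' k 2]
    push_cast
    rw [ih, Nat.cast_choose_two]
    ring

lemma cast_choose_four (k : ℕ) : (k.choose 4 : ℚ) = k * (k - 1) * (k - 2) * (k - 3) / 24 := by
  induction k with
  | zero => simp
  | succ k ih =>
    rw [Nat.choose_succ_succ' k 3]
    push_cast
    rw [ih, cast_choose_three]
    ring

lemma twelve_gain (n k : ℕ) : 12 * gain n k = ((k - 1).choose 2 : ℕ) * weight n k := by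
  rcases k with _ | k
  · simp [gain, weight]
  · rw [gain, weight, cast_choose_four, cast_choose_three, Nat.add_sub_cancel,
      Nat.cast_choose_two]
    push_cast
    ring

lemma weight_mono {n k K : ℕ} (hkK : k ≤ K) (hK : 2 * K ≤ n + 1) (hn : 8 ≤ n) :
    weight n k ≤ weight n K := by
  obtain ⟨c, rfl⟩ := Nat.exists_eq_add_of_le hkK
  have h1 : (2 * (k + c) : ℚ) ≤ n + 1 := by exact_mod_cast hK
  have h2 : (8 : ℚ) ≤ n := by exact_mod_cast hn
  rcases Nat.eq_zero_or_pos c with rfl | hc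
  · simp
  have h3 : (1 : ℚ) ≤ c := by exact_mod_cast hc
  have key : 0 ≤ (c : ℚ) * (4 * n - 6 * k - 3 * c - 7) :=
    mul_nonneg (by positivity) (by linarith)
  simp only [weight]
  push_cast
  nlinarith

lemma weight_nonneg {n K : ℕ} (hK : 2 * K ≤ n + 1) (hn : 8 ≤ n) : 0 ≤ weight n K := by
  simpa [weight] using weight_mono (Nat.zero_le K) hK hn

/-! ### The polynomial inequalities -/

/-- The bound `C(n - 1, 4) + (n - 4)`, which is the gain of the extremal example. -/
def target (n : ℕ) : ℚ := ((n : ℚ) - 1) * (n - 2) * (n - 3) * (n - 4) / 24 + (n - 4)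

lemma ineq_of_small_max {n m : ℕ} (hn : 8 ≤ n) (hm : 4 ≤ m) (h : 2 * m ≤ n + 1) :
    12 * gain n m + ((n - m).choose 2 : ℕ) * weight n m ≤ 12 * target n := by
  rw [twelve_gain, Nat.cast_choose_two, Nat.cast_choose_two,
    Nat.cast_sub (by omega : 1 ≤ m), Nat.cast_sub (by omega : m ≤ n)]
  rw [← sub_nonneg]
  simp only [weight, target]
  rcases hm.eq_or_lt with rfl | hm
  · obtain ⟨d, rfl⟩ := Nat.exists_eq_add_of_le hn
    -- after each substitution all coefficients of the difference are nonnegative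
    push_cast
    ring_nf
    positivity
  · obtain ⟨a, rfl⟩ := Nat.exists_eq_add_of_le (show 5 ≤ m by omega)
    obtain ⟨d, rfl⟩ := Nat.exists_eq_add_of_le (show 2 * a + 9 ≤ n by omega)
    push_cast
    ring_nf
    positivity

lemma ineq_of_large_max {n m : ℕ} (hn : 8 ≤ n) (hmn : m ≤ n) (h : n + 2 ≤ 2 * m) :
    12 * gain n m + ((n - m).choose 2 : ℕ) * weight n (n - m + 1) ≤ 12 * target n := by
  obtain ⟨b, rfl⟩ := Nat.exists_eq_add_of_le hmn
  rw [twelve_gain, Nat.cast_choose_two, Nat.cast_choose_two,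
    Nat.cast_sub (by omega : 1 ≤ m), Nat.add_sub_cancel_left]
  rw [← sub_nonneg]
  simp only [weight, target]
  obtain hb | hb | hb | hb : b = 0 ∨ b = 1 ∨ b = 2 ∨ 3 ≤ b := by omega
  · subst hb
    obtain ⟨d, rfl⟩ := Nat.exists_eq_add_of_le (show 8 ≤ m by omega)
    push_cast
    ring_nf
    positivity
  · subst hb
    obtain ⟨d, rfl⟩ := Nat.exists_eq_add_of_le (show 7 ≤ m by omega)
    push_cast
    ring_nf
    positivity
  · subst hb
    push_cast
    apply le_of_eq
    ring
  · obtain ⟨a, rfl⟩ := Nat.exists_eq_add_of_le hb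
    obtain ⟨d, rfl⟩ := Nat.exists_eq_add_of_le (show a + 5 ≤ m by omega)
    push_cast
    ring_nf
    positivity

lemma ineq_of_max_le_three {n : ℕ} (hn : 8 ≤ n) :
    (n.choose 2 : ℚ) * (4 * (n - 4)) ≤ 12 * target n := by
  rw [Nat.cast_choose_two, ← sub_nonneg, target]
  obtain ⟨d, rfl⟩ := Nat.exists_eq_add_of_le hn
  push_cast
  ring_nf
  positivity

/-! ### Bounding the total gain -/

/-- Distinct edges of a linear hypergraph have no pair of points in common, also after
intersecting them with `B`. -/
lemma sum_pairs_le {n : ℕ} {𝓔 : Finset (Finset (Fin n))} (h : qLinear 2 𝓔)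
    (B : Finset (Fin n)) : ∑ E ∈ 𝓔, (E ∩ B).card.choose 2 ≤ B.card.choose 2 := by
  have hdisj : (𝓔 : Set (Finset (Fin n))).PairwiseDisjoint
      (fun E => (E ∩ B).powersetCard 2) := by
    intro E hE E' hE' hne
    rw [Function.onFun, Finset.disjoint_left]
    intro P hP hP'
    rw [mem_powersetCard] at hP hP'
    have := h E hE E' hE' hne
    have h2 : P ⊆ E ∩ E' := subset_inter (hP.1.trans inter_subset_left)
      (hP'.1.trans inter_subset_left)
    have := card_le_card h2
    omega
  calc ∑ E ∈ 𝓔, (E ∩ B).card.choose 2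
      = (𝓔.biUnion fun E => (E ∩ B).powersetCard 2).card := by
        rw [card_biUnion hdisj]; simp
    _ ≤ (B.powersetCard 2).card := by
        apply card_le_card
        apply biUnion_subset.2
        intro E _
        exact powersetCard_mono inter_subset_right
    _ = _ := by simp

lemma gain_eq_zero {n k : ℕ} (hk : k ≤ 2) : gain n k = 0 := by
  rw [gain, Nat.choose_eq_zero_of_lt (by omega), Nat.choose_eq_zero_of_lt (by omega)]
  simp

lemma sum_gain_le {n : ℕ} (hn : 8 ≤ n) {𝓔 : Finset (Finset (Fin n))} (h : qLinear 2 𝓔) :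
    ∑ E ∈ 𝓔, gain n E.card ≤ target n := by
  have hn' : (8 : ℚ) ≤ n := by exact_mod_cast hn
  suffices 12 * ∑ E ∈ 𝓔, gain n E.card ≤ 12 * target n by linarith
  by_cases h3 : ∀ E ∈ 𝓔, E.card ≤ 3
  · refine le_trans ?_ (ineq_of_max_le_three hn)
    have h1 := sum_pairs_le h univ
    simp only [inter_univ, card_univ, Fintype.card_fin] at h1
    have h2 : (∑ E ∈ 𝓔, (E.card.choose 2 : ℚ)) ≤ n.choose 2 := by exact_mod_cast h1
    refine le_trans ?_ (mul_le_mul_of_nonneg_right h2 (by linarith))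
    rw [mul_sum, sum_mul]
    apply sum_le_sum
    intro E hE
    rcases (h3 E hE).eq_or_lt with hE3 | hE3
    · rw [twelve_gain, hE3, weight]
      norm_num [Nat.choose]
      linarith
    · rw [gain_eq_zero (by omega), mul_zero]
      exact mul_nonneg (by positivity) (by linarith)
  · push Not at h3
    obtain ⟨E₀, hE₀, hE₀3⟩ := h3
    obtain ⟨A, hA, hmax⟩ := exists_max_image 𝓔 card ⟨E₀, hE₀⟩
    have hm : 4 ≤ A.card := by have := hmax E₀ hE₀; omega
    have hmn : A.card ≤ n := by simpa using card_le_univ A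
    -- the bound on the contribution of the remaining edges, for any valid size bound `K`
    have main : ∀ K : ℕ, 2 * K ≤ n + 1 → (∀ E ∈ 𝓔.erase A, 3 ≤ E.card → E.card ≤ K) →
        12 * ∑ E ∈ 𝓔, gain n E.card ≤
          12 * gain n A.card + ((n - A.card).choose 2 : ℕ) * weight n K := by
      intro K hK hsize
      rw [← add_sum_erase _ _ hA, mul_add]
      refine add_le_add le_rfl ?_
      have h1 := sum_pairs_le (𝓔 := 𝓔.erase A)
        (fun E hE E' hE' => h E (mem_of_mem_erase hE) E' (mem_of_mem_erase hE')) Aᶜ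
      rw [card_compl, Fintype.card_fin] at h1
      have h2 : (∑ E ∈ 𝓔.erase A, ((E ∩ Aᶜ).card.choose 2 : ℚ)) ≤
          ((n - A.card).choose 2 : ℕ) := by exact_mod_cast h1
      refine le_trans ?_ (mul_le_mul_of_nonneg_right h2 (weight_nonneg hK hn))
      rw [mul_sum, sum_mul]
      apply sum_le_sum
      intro E hE
      by_cases hE3 : 3 ≤ E.card
      · rw [twelve_gain]
        have hc : E.card - 1 ≤ (E ∩ Aᶜ).card := by
          have := h E (mem_of_mem_erase hE) A hA (ne_of_mem_erase hE)
          have h4 := card_sdiff_add_card_inter E A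
          rw [sdiff_eq_inter_compl] at h4
          omega
        have hw := weight_mono (hsize E hE hE3) hK hn
        refine mul_le_mul_of_nonneg' ?_ hw ?_ ?_
        · exact_mod_cast Nat.choose_le_choose 2 hc
        · exact weight_nonneg (by have := hsize E hE hE3; omega) hn
        · positivity
      · rw [gain_eq_zero (by omega), mul_zero]
        exact mul_nonneg (by positivity) (weight_nonneg hK hn)
    by_cases hs : 2 * A.card ≤ n + 1
    · exact (main A.card hs fun E hE _ => hmax E (mem_of_mem_erase hE)).trans
        (ineq_of_small_max hn hm hs)
    · refine (main (n - A.card + 1) (by omega) ?_).trans (ineq_of_large_max hn hmn (by omega))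
      intro E hE _
      have h1 := h E (mem_of_mem_erase hE) A hA (ne_of_mem_erase hE)
      have h2 := card_sdiff_add_card_inter E A
      rw [sdiff_eq_inter_compl] at h2
      have h3 : (E ∩ Aᶜ).card ≤ Aᶜ.card := card_le_card inter_subset_right
      rw [card_compl, Fintype.card_fin] at h3
      omega

/-! ### Counting edge by edge -/

lemma card_secE {n : ℕ} {𝓔 : Finset (Finset (Fin n))} (h : qLinear 2 𝓔) :
    (secE 3 𝓔).card = ∑ E ∈ 𝓔, E.card.choose 3 := by
  rw [secE, card_biUnion]
  · simp
  · intro E hE E' hE' hne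
    rw [Function.onFun, Finset.disjoint_left]
    intro P hP hP'
    rw [mem_powersetCard] at hP hP'
    have := h E hE E' hE' hne
    have := card_le_card (subset_inter hP.1 hP'.1)
    omega

/-- The 4-sets containing at least three points of `E`: those inside `E`, and those obtained by
adding an outer point to a triple of `E`. -/
def hits {n : ℕ} (E : Finset (Fin n)) : Finset (Finset (Fin n)) :=
  E.powersetCard 4 ∪ (E.powersetCard 3 ×ˢ Eᶜ).image fun p => insert p.2 p.1

lemma card_hits_le {n : ℕ} (E : Finset (Fin n)) :
    (hits E).card ≤ E.card.choose 4 + E.card.choose 3 * (n - E.card) := by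
  refine (card_union_le _ _).trans ?_
  gcongr
  · simp
  · refine card_image_le.trans ?_
    simp [card_compl]

lemma choose_four_le {n : ℕ} (𝓔 : Finset (Finset (Fin n))) :
    n.choose 4 ≤ (zeroE univ 3 𝓔).card +
      ∑ E ∈ 𝓔, (E.card.choose 4 + E.card.choose 3 * (n - E.card)) := by
  have hcover : (univ : Finset (Fin n)).powersetCard 4 ⊆ zeroE univ 3 𝓔 ∪ 𝓔.biUnion hits := by
    intro F hF
    by_cases hz : F ∈ zeroE univ 3 𝓔
    · exact mem_union_left _ hz
    apply mem_union_right
    simp only [zeroE, mem_filter, hF, Nat.reduceAdd, true_and] at hz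
    push Not at hz
    obtain ⟨G, hGF, hG⟩ := hz
    simp only [secE, mem_biUnion] at hG
    obtain ⟨E, hE, hGE⟩ := hG
    refine mem_biUnion.2 ⟨E, hE, ?_⟩
    have hF4 := (mem_powersetCard.1 hF).2
    obtain ⟨hGF, hG3⟩ := mem_powersetCard.1 hGF
    obtain ⟨x, hx⟩ : ∃ x, F \ G = {x} := by
      rw [← card_eq_one, card_sdiff_of_subset hGF]; omega
    have hFx : F = insert x G := by
      rw [insert_eq, ← hx, sdiff_union_of_subset hGF]
    by_cases hxE : x ∈ E
    · apply mem_union_left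
      rw [mem_powersetCard]
      refine ⟨?_, hF4⟩
      rw [hFx]
      exact insert_subset hxE (mem_powersetCard.1 hGE).1
    · apply mem_union_right
      exact mem_image.2 ⟨(G, x), mem_product.2 ⟨hGE, mem_compl.2 hxE⟩, hFx.symm⟩
  calc n.choose 4 = ((univ : Finset (Fin n)).powersetCard 4).card := by simp
    _ ≤ _ := card_le_card hcover
    _ ≤ _ := card_union_le _ _
    _ ≤ _ := by
      gcongr
      exact card_biUnion_le.trans (sum_le_sum fun E _ => card_hits_le E)

lemma lower_bound {n : ℕ} (hn : 8 ≤ n) {𝓔 : Finset (Finset (Fin n))} (h : qLinear 2 𝓔) :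
    (n - 2).choose 3 + (n - 3).choose 2 + 1 ≤
      (secE 3 𝓔).card + (zeroE Finset.univ 3 𝓔).card := by
  have h1 := sum_gain_le hn h
  have h2 : (n.choose 4 : ℚ) ≤ ((zeroE univ 3 𝓔).card : ℚ) +
      ∑ E ∈ 𝓔, ((E.card.choose 4 : ℚ) + E.card.choose 3 * ((n - E.card : ℕ) : ℚ)) := by
    exact_mod_cast choose_four_le 𝓔
  have h3 : ((secE 3 𝓔).card : ℚ) = ∑ E ∈ 𝓔, (E.card.choose 3 : ℚ) := by
    exact_mod_cast card_secE h
  have h4 : ∑ E ∈ 𝓔, ((E.card.choose 4 : ℚ) + E.card.choose 3 * ((n - E.card : ℕ) : ℚ)) =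
      ∑ E ∈ 𝓔, gain n E.card + ∑ E ∈ 𝓔, (E.card.choose 3 : ℚ) := by
    rw [← sum_add_distrib]
    apply sum_congr rfl
    intro E _
    rw [gain, Nat.cast_sub (by simpa using card_le_univ E)]
    ring
  have h5 : (((n - 2).choose 3 + (n - 3).choose 2 + 1 : ℕ) : ℚ) = n.choose 4 - target n := by
    push_cast
    rw [cast_choose_three, cast_choose_four, Nat.cast_choose_two,
      Nat.cast_sub (by omega : 2 ≤ n), Nat.cast_sub (by omega : 3 ≤ n), target]
    push_cast
    ring
  have h6 : (((n - 2).choose 3 + (n - 3).choose 2 + 1 : ℕ) : ℚ) ≤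
      (((secE 3 𝓔).card + (zeroE Finset.univ 3 𝓔).card : ℕ) : ℚ) := by
    rw [h5]
    push_cast
    linarith
  exact_mod_cast h6

/-! ### The extremal example -/

/-- The two edges, of sizes `n - 2` and `3`, are the complement of `{a, b}` and `{a, b, v}`. -/
lemma upper_bound {n : ℕ} {a b v : Fin n} (hab : a ≠ b) (hav : v ≠ a) (hbv : v ≠ b) :
    (secE 3 {({a, b} : Finset (Fin n))ᶜ, {a, b, v}}).card +
      (zeroE univ 3 {({a, b} : Finset (Fin n))ᶜ, {a, b, v}}).card ≤
        (n - 2).choose 3 + (n - 3).choose 2 + 1 := by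
  have hcA : (({a, b} : Finset (Fin n))ᶜ).card = n - 2 := by
    rw [card_compl, card_pair hab, Fintype.card_fin]
  have hc3 : ({a, b, v} : Finset (Fin n)).card = 3 :=
    card_eq_three.2 ⟨a, b, v, hab, hav.symm, hbv.symm, rfl⟩
  have h1 : (secE 3 {({a, b} : Finset (Fin n))ᶜ, {a, b, v}}).card ≤ (n - 2).choose 3 + 1 := by
    rw [secE, biUnion_insert, singleton_biUnion]
    refine (card_union_le _ _).trans ?_
    rw [card_powersetCard, card_powersetCard, hcA, hc3]
    simp
  have h2 : zeroE univ 3 {({a, b} : Finset (Fin n))ᶜ, {a, b, v}} ⊆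
      ((({a, b, v} : Finset (Fin n))ᶜ).powersetCard 2).image fun P => P ∪ {a, b} := by
    intro F hF
    simp only [zeroE, mem_filter, mem_powersetCard, subset_univ, true_and, Nat.reduceAdd] at hF
    obtain ⟨hF4, hF⟩ := hF
    have hsplit := card_sdiff_add_card_inter F {a, b}
    have hle : (F \ {a, b}).card ≤ 2 := by
      by_contra hcon
      obtain ⟨G, hG, hG3⟩ := exists_subset_card_eq (show 3 ≤ (F \ {a, b}).card by omega)
      refine hF G ⟨hG.trans sdiff_subset, hG3⟩ ?_
      refine mem_biUnion.2 ⟨{a, b}ᶜ, by simp, mem_powersetCard.2 ⟨?_, hG3⟩⟩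
      rw [sdiff_eq_inter_compl] at hG
      exact hG.trans inter_subset_right
    have hcab := card_pair hab
    have hab_sub : {a, b} ⊆ F := by
      rw [← inter_eq_right]
      refine eq_of_subset_of_card_le inter_subset_right ?_
      omega
    have hle' := card_le_card (inter_subset_right : F ∩ {a, b} ⊆ {a, b})
    have hvF : v ∉ F := by
      intro hv
      refine hF {a, b, v} ⟨?_, hc3⟩ ?_
      · intro x hx
        simp only [mem_insert, mem_singleton] at hx
        rcases hx with rfl | rfl | rfl
        · exact hab_sub (by simp)
        · exact hab_sub (by simp)
        · exact hv
      · exact mem_biUnion.2 ⟨{a, b, v}, by simp, mem_powersetCard.2 ⟨Subset.rfl, hc3⟩⟩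
    refine mem_image.2 ⟨F \ {a, b}, mem_powersetCard.2 ⟨?_, by omega⟩,
      sdiff_union_of_subset hab_sub⟩
    intro x hx
    simp only [mem_sdiff, mem_insert, mem_singleton, not_or] at hx
    simp only [mem_compl, mem_insert, mem_singleton, not_or]
    exact ⟨hx.2.1, hx.2.2, fun hxv => hvF (hxv ▸ hx.1)⟩
  have h3 : (zeroE univ 3 {({a, b} : Finset (Fin n))ᶜ, {a, b, v}}).card ≤
      (n - 3).choose 2 := by
    refine (card_le_card h2).trans (card_image_le.trans ?_)
    rw [card_powersetCard, card_compl, hc3, Fintype.card_fin]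
  omega

theorem linear_min_n8 (n : ℕ) (hn : 8 ≤ n) :
    (∀ 𝓔 : Finset (Finset (Fin n)), qLinear 2 𝓔 →
      (n - 2).choose 3 + (n - 3).choose 2 + 1 ≤
        (secE 3 𝓔).card + (zeroE Finset.univ 3 𝓔).card) ∧
    ∃ 𝓔 : Finset (Finset (Fin n)), ∃ E₁ E₂ : Finset (Fin n),
      𝓔 = {E₁, E₂} ∧ E₁.card = n - 2 ∧ E₂.card = 3 ∧ (E₁ ∩ E₂).card = 1 ∧
      qLinear 2 𝓔 ∧
      (secE 3 𝓔).card + (zeroE Finset.univ 3 𝓔).card =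
        (n - 2).choose 3 + (n - 3).choose 2 + 1 := by
  refine ⟨fun 𝓔 h => lower_bound hn h, ?_⟩
  obtain ⟨a, b, v, hab, hav, hbv⟩ : ∃ a b v : Fin n, a ≠ b ∧ v ≠ a ∧ v ≠ b :=
    ⟨⟨0, by omega⟩, ⟨1, by omega⟩, ⟨2, by omega⟩, by simp, by simp, by simp⟩
  have hint : (({a, b} : Finset (Fin n))ᶜ ∩ {a, b, v}).card = 1 := by
    rw [card_eq_one]
    refine ⟨v, ?_⟩
    ext x
    simp only [mem_inter, mem_compl, mem_insert, mem_singleton]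
    constructor
    · tauto
    · rintro rfl
      tauto
  have hlin : qLinear 2 {({a, b} : Finset (Fin n))ᶜ, {a, b, v}} := by
    intro E hE E' hE' hne
    simp only [mem_insert, mem_singleton] at hE hE'
    rcases hE with rfl | rfl <;> rcases hE' with rfl | rfl
    · exact absurd rfl hne
    · omega
    · rw [inter_comm]
      omega
    · exact absurd rfl hne
  refine ⟨_, ({a, b} : Finset (Fin n))ᶜ, {a, b, v}, rfl, ?_, ?_, hint, hlin, ?_⟩
  · rw [card_compl, card_pair hab, Fintype.card_fin]
  · exact card_eq_three.2 ⟨a, b, v, hab, hav.symm, hbv.symm, rfl⟩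
  · exact le_antisymm (upper_bound hab hav hbv) (lower_bound hn hlin)
end
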